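/- arXiv:1706.07309 — 2 statements merged into one kernel-verified Lean document; each statement's English description precedes it below -/
import Mathlib

section
/- Let K be a field of prime characteristic p, let f ∈ K[x₁,...,x_t] be a nonzero polynomial with zero constant term, let N and e be positive integers with N/pᵉ ≤ 1. Then f^N does not belong to the ideal (x₁^{pᵉ},...,x_t^{pᵉ}) of K[x₁,...,x_t] if and only if N/pᵉ < FT(f). -/
open MvPolynomial

/-- The F-pure threshold of `f ∈ K[x₁,…,x_t]` in characteristic `p`: the supremum in `ℝ`
of the set `{N/pᵉ : N, e positive integers with f^N ∉ (x₁^{pᵉ},…,x_t^{pᵉ})}`. -/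
noncomputable def fpt {t : ℕ} {K : Type*} [Field K] (p : ℕ) (f : MvPolynomial (Fin t) K) : ℝ :=
  sSup {r : ℝ | ∃ N e : ℕ, 0 < N ∧ 0 < e ∧
    f ^ N ∉ Ideal.span (Set.range fun i => (X i : MvPolynomial (Fin t) K) ^ p ^ e) ∧
    r = (N : ℝ) / (p : ℝ) ^ e}

/-!
In characteristic `p` the monomials of `g ^ p ^ d` are the `p ^ d`-th powers of the monomials of
`g`. So if every exponent of `h` is smaller than `p ^ d`, then a monomial of `h * g ^ p ^ d`
determines, by division with remainder, the monomials of `h` and `g` it comes from, and no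
cancellation occurs: this is the flatness of Frobenius made explicit.

If `f ^ N ∉ (x₁^{pᵉ},…,x_t^{pᵉ})`, take `h = f` and `g = f ^ N` with `d` large. Then
`f ^ (N * p ^ d + 1) ∉ (x₁^{p^(e+d)},…,x_t^{p^(e+d)})`, so `N / pᵉ` lies strictly below a
member of the set whose supremum is the threshold. If instead
`f ^ N ∈ (x₁^{pᵉ},…,x_t^{pᵉ})`, then comparing Frobenius powers at a common level shows that
`N / pᵉ` is an upper bound of that set. Applied to `f ^ 1 ∈ (x₁,…,x_t)`, the same comparison
bounds the set by `1`.
-/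

section VarPowIdeal

variable {σ R : Type*} [CommSemiring R]

variable (σ R) in
/-- The ideal generated by the `n`-th powers of the variables. For `n = p ^ e` in characteristic
`p` it is the `e`-th Frobenius power of the ideal of the origin. -/
noncomputable def varPowIdeal (n : ℕ) : Ideal (MvPolynomial σ R) :=
  Ideal.span (Set.range fun i => (X i : MvPolynomial σ R) ^ n)

theorem mem_varPowIdeal_iff {n : ℕ} {g : MvPolynomial σ R} :
    g ∈ varPowIdeal σ R n ↔ ∀ m ∈ g.support, ∃ i, n ≤ m i := by
  have generators : (Set.range fun i => (X i : MvPolynomial σ R) ^ n) =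
      (fun m => monomial m 1) '' Set.range fun i => Finsupp.single i n := by
    simp only [← Set.range_comp, Function.comp_def, X_pow_eq_monomial]
  rw [varPowIdeal, generators, mem_ideal_span_monomial_image]
  simp only [Set.exists_range_iff, Finsupp.single_le_iff]

theorem notMem_varPowIdeal_iff {n : ℕ} {g : MvPolynomial σ R} :
    g ∉ varPowIdeal σ R n ↔ ∃ m ∈ g.support, ∀ i, m i < n := by
  simp only [mem_varPowIdeal_iff, not_forall, not_exists, not_le, exists_prop]

theorem mem_varPowIdeal_one {g : MvPolynomial σ R} (hg : coeff 0 g = 0) :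
    g ∈ varPowIdeal σ R 1 := by
  refine mem_varPowIdeal_iff.2 fun m hm => ?_
  have m_ne_zero : m ≠ 0 := by
    rintro rfl
    exact mem_support_iff.1 hm hg
  obtain ⟨i, hi⟩ := Finsupp.ne_iff.1 m_ne_zero
  exact ⟨i, Nat.one_le_iff_ne_zero.2 hi⟩

end VarPowIdeal

section Frobenius

variable {σ R : Type*} [CommSemiring R] (p : ℕ) [ExpChar R p] (d : ℕ)

theorem exists_smul_eq_of_mem_support_pow {g : MvPolynomial σ R} {m : σ →₀ ℕ}
    (hm : m ∈ (g ^ p ^ d).support) : ∃ a ∈ g.support, p ^ d • a = m := by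
  classical
  rw [← map_iterateFrobenius_expand p g d] at hm
  exact Finset.mem_image.1 (support_expand_subset g (support_map_subset _ _ hm))

theorem coeff_smul_pow (g : MvPolynomial σ R) (a : σ →₀ ℕ) :
    coeff (p ^ d • a) (g ^ p ^ d) = coeff a g ^ p ^ d := by
  rw [← map_iterateFrobenius_expand p g d, coeff_map,
    coeff_expand_smul _ (pow_ne_zero _ (expChar_pos R p).ne'), iterateFrobenius_def]

theorem coeff_add_smul_mul_pow {h : MvPolynomial σ R} (hh : ∀ i, degreeOf i h < p ^ d)
    (g : MvPolynomial σ R) {b : σ →₀ ℕ} (hb : ∀ i, b i < p ^ d) (a : σ →₀ ℕ) :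
    coeff (b + p ^ d • a) (h * g ^ p ^ d) = coeff b h * coeff a g ^ p ^ d := by
  classical
  rw [coeff_mul, ← coeff_smul_pow]
  have pair_mem : (b, p ^ d • a) ∈ Finset.HasAntidiagonal.antidiagonal (b + p ^ d • a) :=
    Finset.HasAntidiagonal.mem_antidiagonal.2 rfl
  refine Finset.sum_eq_single_of_mem _ pair_mem ?_
  rintro ⟨u, v⟩ huv huv_ne
  rw [Finset.HasAntidiagonal.mem_antidiagonal] at huv
  by_contra coeff_mul_ne_zero
  have hu : u ∈ h.support := mem_support_iff.2 (left_ne_zero_of_mul coeff_mul_ne_zero)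
  obtain ⟨a', -, rfl⟩ := exists_smul_eq_of_mem_support_pow p d
    (mem_support_iff.2 (right_ne_zero_of_mul coeff_mul_ne_zero))
  -- Reducing the exponents modulo `p ^ d` recovers the monomial of `h`.
  have u_eq_b : u = b := by
    ext i
    have hui : u i < p ^ d := (monomial_le_degreeOf i hu).trans_lt (hh i)
    have mod_eq := congrArg (· % p ^ d) (DFunLike.congr_fun huv i)
    simpa [Nat.mod_eq_of_lt hui, Nat.mod_eq_of_lt (hb i)] using mod_eq
  subst u_eq_b
  exact huv_ne (Prod.ext rfl (add_left_cancel huv))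

theorem pow_mem_varPowIdeal_mul_iff [IsReduced R] {n : ℕ} {g : MvPolynomial σ R} :
    g ^ p ^ d ∈ varPowIdeal σ R (p ^ d * n) ↔ g ∈ varPowIdeal σ R n := by
  have scale_le (a : σ →₀ ℕ) (i : σ) : p ^ d * n ≤ (p ^ d • a) i ↔ n ≤ a i :=
    Nat.mul_le_mul_left_iff (pow_pos (expChar_pos R p) d)
  simp only [mem_varPowIdeal_iff]
  constructor
  · intro hpow a ha
    have : p ^ d • a ∈ (g ^ p ^ d).support := by
      rw [mem_support_iff, coeff_smul_pow]
      exact pow_ne_zero _ (mem_support_iff.1 ha)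
    simpa only [scale_le] using hpow _ this
  · intro hg m hm
    obtain ⟨a, ha, rfl⟩ := exists_smul_eq_of_mem_support_pow p d hm
    simpa only [scale_le] using hg a ha

theorem mul_pow_notMem_varPowIdeal [NoZeroDivisors R] {n : ℕ} {g h : MvPolynomial σ R}
    (h_ne_zero : h ≠ 0) (hh : ∀ i, degreeOf i h < p ^ d) (hg : g ∉ varPowIdeal σ R n) :
    h * g ^ p ^ d ∉ varPowIdeal σ R (p ^ d * n) := by
  obtain ⟨a, ha, ha_lt⟩ := notMem_varPowIdeal_iff.1 hg
  obtain ⟨b, hb⟩ := support_nonempty.2 h_ne_zero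
  have hb_lt (i : σ) : b i < p ^ d := (monomial_le_degreeOf i hb).trans_lt (hh i)
  refine notMem_varPowIdeal_iff.2 ⟨b + p ^ d • a, ?_, fun i => ?_⟩
  · rw [mem_support_iff, coeff_add_smul_mul_pow p d hh g hb_lt]
    exact mul_ne_zero (mem_support_iff.1 hb) (pow_ne_zero _ (mem_support_iff.1 ha))
  · calc b i + p ^ d * a i < p ^ d + p ^ d * a i := Nat.add_lt_add_right (hb_lt i) _
      _ = p ^ d * (a i + 1) := by ring
      _ ≤ p ^ d * n := Nat.mul_le_mul_left _ (ha_lt i)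

end Frobenius

section FPureThreshold

variable {σ R : Type*} [CommSemiring R]

/-- The set of ratios whose supremum is the F-pure threshold of `f`, for an arbitrary set of
variables and arbitrary coefficients: for `f ∈ K[x₁,…,x_t]` over a field, `fpt p f` unfolds to
`sSup (fPureRatios p f)`. -/
def fPureRatios (p : ℕ) (f : MvPolynomial σ R) : Set ℝ :=
  {r : ℝ | ∃ N e : ℕ, 0 < N ∧ 0 < e ∧ f ^ N ∉ varPowIdeal σ R (p ^ e) ∧
    r = (N : ℝ) / (p : ℝ) ^ e}

variable {p : ℕ} {f : MvPolynomial σ R}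

theorem div_lt_div_of_pow_notMem_of_pow_mem [ExpChar R p] [IsReduced R] {M N d e : ℕ}
    (hM : f ^ M ∉ varPowIdeal σ R (p ^ d)) (hN : f ^ N ∈ varPowIdeal σ R (p ^ e)) :
    (M : ℝ) / (p : ℝ) ^ d < (N : ℝ) / (p : ℝ) ^ e := by
  have p_pos : (0 : ℝ) < p := by exact_mod_cast expChar_pos R p
  rw [← pow_mem_varPowIdeal_mul_iff p e, ← pow_mul] at hM
  rw [← pow_mem_varPowIdeal_mul_iff p d, ← pow_mul, mul_comm (p ^ d)] at hN
  have exponents_lt : M * p ^ e < N * p ^ d := by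
    by_contra! hle
    exact hM (Ideal.mem_of_dvd _ (pow_dvd_pow f hle) hN)
  rw [div_lt_div_iff₀ (by positivity) (by positivity)]
  exact_mod_cast exponents_lt

theorem lt_div_of_mem_fPureRatios [ExpChar R p] [IsReduced R] {N e : ℕ}
    (hN : f ^ N ∈ varPowIdeal σ R (p ^ e)) {r : ℝ} (hr : r ∈ fPureRatios p f) :
    r < (N : ℝ) / (p : ℝ) ^ e := by
  obtain ⟨M, d, -, -, hM, rfl⟩ := hr
  exact div_lt_div_of_pow_notMem_of_pow_mem hM hN

theorem bddAbove_fPureRatios [ExpChar R p] [IsReduced R] (hconst : coeff 0 f = 0) :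
    BddAbove (fPureRatios p f) := by
  have pow_one_mem : f ^ 1 ∈ varPowIdeal σ R (p ^ 0) := by
    simpa only [pow_one, pow_zero] using mem_varPowIdeal_one hconst
  exact ⟨_, fun _ hr => (lt_div_of_mem_fPureRatios pow_one_mem hr).le⟩

theorem exists_mem_fPureRatios_gt [NoZeroDivisors R] (hp : p.Prime) [CharP R p] (hf0 : f ≠ 0)
    {N e : ℕ} (hN : f ^ N ∉ varPowIdeal σ R (p ^ e)) :
    ∃ r ∈ fPureRatios p f, (N : ℝ) / (p : ℝ) ^ e < r := by
  have := ExpChar.prime (R := R) hp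
  have p_pos : (0 : ℝ) < p := by exact_mod_cast hp.pos
  obtain ⟨d, d_pos, totalDegree_lt⟩ : ∃ d, 0 < d ∧ f.totalDegree < p ^ d :=
    ⟨f.totalDegree + 1, Nat.succ_pos _, (Nat.lt_succ_self _).trans (Nat.lt_pow_self hp.one_lt)⟩
  have degreeOf_lt (i : σ) : degreeOf i f < p ^ d :=
    (degreeOf_le_totalDegree f i).trans_lt totalDegree_lt
  have pow_notMem : f ^ (N * p ^ d + 1) ∉ varPowIdeal σ R (p ^ (d + e)) := by
    rw [pow_succ', pow_mul, pow_add]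
    exact mul_pow_notMem_varPowIdeal p d hf0 degreeOf_lt hN
  refine ⟨_, ⟨N * p ^ d + 1, d + e, Nat.succ_pos _, Nat.add_pos_left d_pos e, pow_notMem, rfl⟩, ?_⟩
  calc (N : ℝ) / (p : ℝ) ^ e = (N * p ^ d : ℝ) / (p : ℝ) ^ (d + e) := by
        rw [pow_add]
        field_simp
    _ < ((N * p ^ d + 1 : ℕ) : ℝ) / (p : ℝ) ^ (d + e) := by
        push_cast
        gcongr
        exact lt_add_one _

end FPureThreshold

theorem stmt13_general {σ R : Type*} [CommSemiring R] [NoZeroDivisors R] {p : ℕ} (hp : p.Prime)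
    [CharP R p] (f : MvPolynomial σ R) (hf0 : f ≠ 0) (hconst : coeff 0 f = 0) (N e : ℕ) :
    f ^ N ∉ varPowIdeal σ R (p ^ e) ↔ (N : ℝ) / (p : ℝ) ^ e < sSup (fPureRatios p f) := by
  have := ExpChar.prime (R := R) hp
  constructor
  · intro hN
    obtain ⟨r, hr, hlt⟩ := exists_mem_fPureRatios_gt hp hf0 hN
    exact hlt.trans_le (le_csSup (bddAbove_fPureRatios hconst) hr)
  · intro hlt hN
    have sSup_le : sSup (fPureRatios p f) ≤ (N : ℝ) / (p : ℝ) ^ e :=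
      Real.sSup_le (fun r hr => (lt_div_of_mem_fPureRatios hN hr).le) (by positivity)
    exact hlt.not_ge sSup_le

theorem stmt13 {t : ℕ} {K : Type*} [Field K] (p : ℕ) (hp : p.Prime) [CharP K p]
    (f : MvPolynomial (Fin t) K) (hf0 : f ≠ 0) (hconst : MvPolynomial.coeff 0 f = 0)
    (N e : ℕ) (hN : 0 < N) (he : 0 < e) (hle : (N : ℝ) / (p : ℝ) ^ e ≤ 1) :
    f ^ N ∉ Ideal.span (Set.range fun i => (X i : MvPolynomial (Fin t) K) ^ p ^ e) ↔
      (N : ℝ) / (p : ℝ) ^ e < fpt p f :=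
  stmt13_general hp f hf0 hconst N e
end

section
/- Let K be a field of characteristic 2, let a ∈ K with a ≠ 0 and a ≠ 1, and let f_a = y²z + x(x+z)(x+az) ∈ K[x,y,z]. Then the F-pure threshold of f_a equals 1/2. -/
/-!
Write `m = (x₁, …, x_t)` and `m^[q] = (x₁^q, …, x_t^q)`. If `f ∈ m^[p]`, then Frobenius gives
`f^q ∈ m^[pq]` for every power `q` of `p`, so the threshold is at most `1/p`. Here
`f_a = y²z + x³ + (a+1)x²z + axz²`, in which every monomial is divisible by the square of a
variable, and `p = 2`.

For the opposite inequality, restrict to the plane `x = 0`. A ring homomorphism taking variables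
into `m` takes `m^[q]` into `m^[q]`, so it cannot increase the threshold; and `f_a` restricts to
the monomial `y²z`, whose threshold is the reciprocal of its largest exponent.
-/

open MvPolynomial

section IdealOfVarPows

variable {σ τ R S : Type*} [CommSemiring R] [CommSemiring S]

variable (σ R) in
/-- The ideal generated by the `n`-th powers of the variables. When `n` is a power of the
characteristic, it is the Frobenius power `m^[n]` of the ideal `m` generated by the variables, and
it is the ideal that occurs in the definition of `fpt`. -/
noncomputable def idealOfVarPows (n : ℕ) : Ideal (MvPolynomial σ R) :=
  Ideal.span (Set.range fun i => X i ^ n)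

lemma X_pow_mem_idealOfVarPows (i : σ) (n : ℕ) :
    (X i : MvPolynomial σ R) ^ n ∈ idealOfVarPows σ R n :=
  Ideal.subset_span ⟨i, rfl⟩

lemma idealOfVarPows_le_iff {n : ℕ} {I : Ideal (MvPolynomial σ R)} :
    idealOfVarPows σ R n ≤ I ↔ ∀ i, X i ^ n ∈ I := by
  rw [idealOfVarPows, Ideal.span_le, Set.range_subset_iff]
  rfl

lemma idealOfVarPows_one : idealOfVarPows σ R 1 = idealOfVars σ R := by
  simp only [idealOfVarPows, idealOfVars, pow_one]

lemma X_mem_idealOfVars (i : σ) : (X i : MvPolynomial σ R) ∈ idealOfVars σ R :=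
  Ideal.subset_span ⟨i, rfl⟩

lemma idealOfVarPows_le_idealOfVars {n : ℕ} (hn : n ≠ 0) :
    idealOfVarPows σ R n ≤ idealOfVars σ R :=
  idealOfVarPows_le_iff.2 fun i =>
    Ideal.pow_mem_of_mem _ (X_mem_idealOfVars i) n (Nat.pos_of_ne_zero hn)

lemma exists_pow_mem_idealOfVarPows {f : MvPolynomial σ R} (hf : f ∈ idealOfVars σ R) (n : ℕ) :
    ∃ M, f ^ M ∈ idealOfVarPows σ R n := by
  have hle : idealOfVars σ R ≤ (idealOfVarPows σ R n).radical := by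
    rw [← idealOfVarPows_one, idealOfVarPows_le_iff]
    exact fun i => ⟨n, by simpa only [pow_one] using X_pow_mem_idealOfVarPows i n⟩
  exact hle hf

lemma monomial_mem_idealOfVarPows_iff {n : ℕ} {s : σ →₀ ℕ} {c : R} (hc : c ≠ 0) :
    monomial s c ∈ idealOfVarPows σ R n ↔ ∃ i, n ≤ s i := by
  classical
  have hspan : idealOfVarPows σ R n =
      Ideal.span ((fun s => monomial s 1) '' Set.range fun i => Finsupp.single i n) := by
    simp only [idealOfVarPows, X_pow_eq_monomial, ← Set.range_comp, Function.comp_def]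
  simp [hspan, mem_ideal_span_monomial_image, support_monomial, hc]

lemma monomial_pow_notMem_idealOfVarPows_iff [NoZeroDivisors R] {s : σ →₀ ℕ} {c : R} (hc : c ≠ 0)
    {d N n : ℕ} (hd : IsGreatest (Set.range s) d) :
    monomial s c ^ N ∉ idealOfVarPows σ R n ↔ N * d < n := by
  obtain ⟨⟨j, rfl⟩, hle⟩ := hd
  rw [monomial_pow, monomial_mem_idealOfVarPows_iff (pow_ne_zero N hc), not_exists]
  simp only [Finsupp.smul_apply, smul_eq_mul, not_le]
  exact ⟨fun h => h j, fun h i => (Nat.mul_le_mul_left N (hle ⟨i, rfl⟩)).trans_lt h⟩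

lemma pow_mem_idealOfVarPows_mul {p : ℕ} [ExpChar R p] {n : ℕ} {f : MvPolynomial σ R}
    (hf : f ∈ idealOfVarPows σ R n) (k : ℕ) :
    f ^ p ^ k ∈ idealOfVarPows σ R (n * p ^ k) := by
  have hle : idealOfVarPows σ R n ≤
      (idealOfVarPows σ R (n * p ^ k)).comap (iterateFrobenius (MvPolynomial σ R) p k) := by
    refine idealOfVarPows_le_iff.2 fun i => ?_
    rw [Ideal.mem_comap, iterateFrobenius_def, ← pow_mul]
    exact X_pow_mem_idealOfVarPows i _
  exact hle hf

lemma map_mem_idealOfVarPows {p : ℕ} [ExpChar S p] {e : ℕ}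
    {φ : MvPolynomial σ R →+* MvPolynomial τ S} (hφ : ∀ i, φ (X i) ∈ idealOfVars τ S)
    {f : MvPolynomial σ R} (hf : f ∈ idealOfVarPows σ R (p ^ e)) :
    φ f ∈ idealOfVarPows τ S (p ^ e) := by
  have hle : idealOfVarPows σ R (p ^ e) ≤ (idealOfVarPows τ S (p ^ e)).comap φ := by
    refine idealOfVarPows_le_iff.2 fun i => ?_
    have hi : φ (X i) ∈ idealOfVarPows τ S 1 := by
      rw [idealOfVarPows_one]
      exact hφ i
    simpa only [Ideal.mem_comap, map_pow, one_mul] using pow_mem_idealOfVarPows_mul hi e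
  exact hle hf

end IdealOfVarPows

section FPureThreshold

variable {K L : Type*} [Field K] [Field L] {p t u : ℕ} [Fact p.Prime] [CharP K p] [CharP L p]

lemma div_le_div_of_pow_mem_of_pow_notMem {f : MvPolynomial (Fin t) K} {M N e : ℕ} (he : e ≠ 0)
    (hM : f ^ M ∈ idealOfVarPows (Fin t) K p) (hN : f ^ N ∉ idealOfVarPows (Fin t) K (p ^ e)) :
    (N / p ^ e : ℝ) ≤ M / p := by
  obtain ⟨k, rfl⟩ := Nat.exists_eq_succ_of_ne_zero he
  have hp : (0 : ℝ) < p := mod_cast (Fact.out : p.Prime).pos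
  have hMk : f ^ (M * p ^ k) ∈ idealOfVarPows (Fin t) K (p ^ (k + 1)) := by
    simpa only [pow_mul, pow_succ'] using pow_mem_idealOfVarPows_mul hM k
  have hlt : N < M * p ^ k := by
    by_contra! hle
    exact hN (Ideal.mem_of_dvd _ (pow_dvd_pow f hle) hMk)
  calc (N / p ^ (k + 1) : ℝ) ≤ (M * p ^ k) / p ^ (k + 1) := by gcongr; exact_mod_cast hlt.le
    _ = M / p := by rw [pow_succ', mul_div_mul_right _ _ (by positivity)]

lemma fpt_le_div_of_pow_mem {f : MvPolynomial (Fin t) K} {M : ℕ}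
    (hM : f ^ M ∈ idealOfVarPows (Fin t) K p) : fpt p f ≤ M / p := by
  refine Real.sSup_le ?_ (by positivity)
  rintro _ ⟨N, e, -, he, hN, rfl⟩
  exact div_le_div_of_pow_mem_of_pow_notMem he.ne' hM hN

lemma fpt_nonneg (p : ℕ) (f : MvPolynomial (Fin t) K) : 0 ≤ fpt p f := by
  refine Real.sSup_nonneg ?_
  rintro _ ⟨N, e, -, -, -, rfl⟩
  positivity

-- For `f ∉ idealOfVars` the supremum is over an unbounded set, so `fpt p f` has the value `0`.
lemma div_le_fpt {f : MvPolynomial (Fin t) K} (hf : f ∈ idealOfVars (Fin t) K) {N e : ℕ}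
    (hN : f ^ N ∉ idealOfVarPows (Fin t) K (p ^ e)) : (N / p ^ e : ℝ) ≤ fpt p f := by
  obtain rfl | hN0 := eq_or_ne N 0
  · simpa using fpt_nonneg p f
  have he : e ≠ 0 := by
    rintro rfl
    rw [pow_zero, idealOfVarPows_one] at hN
    exact hN (Ideal.pow_mem_of_mem _ hf N (Nat.pos_of_ne_zero hN0))
  obtain ⟨M, hM⟩ := exists_pow_mem_idealOfVarPows hf p
  refine le_csSup ⟨M / p, ?_⟩ ⟨N, e, Nat.pos_of_ne_zero hN0, Nat.pos_of_ne_zero he, hN, rfl⟩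
  rintro _ ⟨N', e', -, he', hN', rfl⟩
  exact div_le_div_of_pow_mem_of_pow_notMem he'.ne' hM hN'

lemma fpt_map_le {φ : MvPolynomial (Fin t) K →+* MvPolynomial (Fin u) L}
    (hφ : ∀ i, φ (X i) ∈ idealOfVars (Fin u) L) {f : MvPolynomial (Fin t) K}
    (hf : f ∈ idealOfVars (Fin t) K) : fpt p (φ f) ≤ fpt p f := by
  refine Real.sSup_le ?_ (fpt_nonneg p f)
  rintro _ ⟨N, e, -, -, hN, rfl⟩
  refine div_le_fpt hf fun h => hN ?_
  rw [← map_pow]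
  exact map_mem_idealOfVarPows hφ h

lemma one_div_sub_le_fpt_monomial {s : Fin t →₀ ℕ} {c : K} (hc : c ≠ 0) {d : ℕ} (hd0 : d ≠ 0)
    (hd : IsGreatest (Set.range s) d) (e : ℕ) :
    1 / (d : ℝ) - (1 / p) ^ e ≤ fpt p (monomial s c) := by
  have hp_pos : 0 < p := (Fact.out : p.Prime).pos
  have hd_pos : 0 < d := Nat.pos_of_ne_zero hd0
  have hmem : monomial s c ∈ idealOfVars (Fin t) K := by
    obtain ⟨j, rfl⟩ := hd.1
    rw [← idealOfVarPows_one, monomial_mem_idealOfVarPows_iff hc]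
    exact ⟨j, hd_pos⟩
  -- the largest `N` with `N * d < p ^ e`
  set N := (p ^ e - 1) / d
  have hN : N * d < p ^ e :=
    (Nat.div_mul_le_self _ d).trans_lt (Nat.sub_lt (pow_pos hp_pos e) one_pos)
  have hN' : (p ^ e : ℝ) ≤ d * (N + 1) :=
    mod_cast Nat.le_of_pred_lt (Nat.lt_mul_div_succ (p ^ e - 1) hd_pos)
  calc 1 / (d : ℝ) - (1 / p) ^ e ≤ N / p ^ e := by
        rw [one_div_pow, sub_le_iff_le_add, ← add_div,
          div_le_div_iff₀ (by positivity) (by positivity)]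
        linarith
    _ ≤ fpt p (monomial s c) :=
        div_le_fpt hmem ((monomial_pow_notMem_idealOfVarPows_iff hc hd).2 hN)

lemma fpt_monomial {s : Fin t →₀ ℕ} {c : K} (hc : c ≠ 0) {d : ℕ} (hd0 : d ≠ 0)
    (hd : IsGreatest (Set.range s) d) : fpt p (monomial s c) = 1 / d := by
  have hp : 1 < (p : ℝ) := mod_cast (Fact.out : p.Prime).one_lt
  refine le_antisymm (Real.sSup_le ?_ (by positivity)) ?_
  · rintro _ ⟨N, e, -, -, hN, rfl⟩
    have hlt : (N * d : ℝ) < p ^ e :=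
      mod_cast (monomial_pow_notMem_idealOfVarPows_iff hc hd).1 hN
    rw [div_le_div_iff₀ (by positivity) (by positivity), one_mul]
    exact hlt.le
  · have hlim : Filter.Tendsto (fun e : ℕ => 1 / (d : ℝ) - (1 / p) ^ e) Filter.atTop
        (nhds (1 / d)) := by
      simpa only [sub_zero] using (tendsto_pow_atTop_nhds_zero_of_lt_one (by positivity)
        ((div_lt_one (by positivity)).2 hp)).const_sub (1 / (d : ℝ))
    exact le_of_tendsto' hlim (one_div_sub_le_fpt_monomial hc hd0 hd)

end FPureThreshold

section Cubic

variable {K : Type*}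

lemma cubic_mem_idealOfVarPows_two [CommSemiring K] (a : K) :
    X 1 ^ 2 * X 2 + X 0 * (X 0 + X 2) * (X 0 + C a * X 2) ∈ idealOfVarPows (Fin 3) K 2 := by
  have hexpand : (X 1 ^ 2 * X 2 + X 0 * (X 0 + X 2) * (X 0 + C a * X 2) : MvPolynomial (Fin 3) K) =
      (X 0 + X 2 + C a * X 2) * X 0 ^ 2 + X 2 * X 1 ^ 2 + C a * X 0 * X 2 ^ 2 := by ring
  have hmul (g : MvPolynomial (Fin 3) K) (i : Fin 3) : g * X i ^ 2 ∈ idealOfVarPows (Fin 3) K 2 :=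
    Ideal.mul_mem_left _ g (X_pow_mem_idealOfVarPows i 2)
  rw [hexpand]
  exact add_mem (add_mem (hmul _ 0) (hmul _ 1)) (hmul _ 2)

lemma fpt_X_sq_mul_X [Field K] {p : ℕ} [Fact p.Prime] [CharP K p] :
    fpt p (X 0 ^ 2 * X 1 : MvPolynomial (Fin 2) K) = 1 / 2 := by
  have hmonomial : (X 0 ^ 2 * X 1 : MvPolynomial (Fin 2) K) =
      monomial (Finsupp.single 0 2 + Finsupp.single 1 1) 1 := by
    rw [X_pow_eq_monomial, X, monomial_mul, one_mul]
  have hgreatest : IsGreatest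
      (Set.range (Finsupp.single 0 2 + Finsupp.single 1 1 : Fin 2 →₀ ℕ)) 2 := by
    refine ⟨⟨0, by simp⟩, ?_⟩
    rintro _ ⟨i, rfl⟩
    fin_cases i <;> simp
  rw [hmonomial, fpt_monomial one_ne_zero two_ne_zero hgreatest, Nat.cast_ofNat]

end Cubic

theorem stmt19 {K : Type*} [Field K] [CharP K 2]
    (a : K) (ha0 : a ≠ 0) (ha1 : a ≠ 1)
    (f : MvPolynomial (Fin 3) K)
    (hf : f = X 1 ^ 2 * X 2 + X 0 * (X 0 + X 2) * (X 0 + C a * X 2)) :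
    fpt 2 f = 1 / 2 := by
  have hf2 : f ∈ idealOfVarPows (Fin 3) K 2 := hf ▸ cubic_mem_idealOfVarPows_two a
  apply le_antisymm
  · have hf1 : f ^ 1 ∈ idealOfVarPows (Fin 3) K 2 := by rwa [pow_one]
    exact_mod_cast fpt_le_div_of_pow_mem hf1
  let φ : MvPolynomial (Fin 3) K →+* MvPolynomial (Fin 2) K := eval₂Hom C ![0, X 0, X 1]
  have hφ : ∀ i, φ (X i) ∈ idealOfVars (Fin 2) K := by
    simp [φ, Fin.forall_fin_succ, X_mem_idealOfVars]
  have hφf : φ f = X 0 ^ 2 * X 1 := by simp [φ, hf]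
  calc (1 / 2 : ℝ) = fpt 2 (φ f) := by rw [hφf, fpt_X_sq_mul_X]
    _ ≤ fpt 2 f := fpt_map_le hφ (idealOfVarPows_le_idealOfVars two_ne_zero hf2)
end
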